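/- Two simple modules D(r) and D(r') (r, r' ‚ąą R_b) are isomorphic if and only if r = r'. Specifically, from D(r) one recovers ‚Ąď(r) as dim_K D(r) and N(r) as the set of integers n for which there exists a nonzero x ‚ąą D(r) with ŌÜ^{‚Ąď(r)}(x) = u^n x; these data determine r in R_b. -/

import Mathlib

/-- The φ-semilinear operator of the φ-module `D(d, n, a)` over `K = k((u))`. -/
noncomputable def Dphi {k : Type*} [Field k]
    (φ : LaurentSeries k →+* LaurentSeries k) (d n : ℕ) (a : k)
    (x : Fin d → LaurentSeries k) : Fin d → LaurentSeries k :=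
  fun j =>
    if (j : ℕ) = 0 then
      HahnSeries.single (n : ℤ) a * φ (x ⟨d - 1, by have := j.isLt; omega⟩)
    else
      φ (x ⟨(j : ℕ) - 1, by have := j.isLt; omega⟩)

/-!
Let `Φ` be the `φ`-semilinear operator of `D(ℓ, n)`.  On coordinates, `Φ^ℓ` is `φ^ℓ` followed by
the diagonal matrix with entries `u^(n bʲ)`, and `φ` multiplies `u`-adic orders by `b`.  Comparing
orders, an equation `Φ^ℓ x = u^N x` with `x ≠ 0` forces `N ≡ n bʲ (mod b^ℓ - 1)` for some `j`.
Applied to the image of the first basis vector, this shows that the isomorphism class determines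
`n` modulo `b^ℓ - 1` up to powers of `b`.  Conversely, conjugating by the diagonal matrix with
entries `u^(w bʲ)` changes `n` by `w (b^ℓ - 1)`, and the matrix `A` with `Φ = A φ` intertwines
`φ(A) φ` and `A φ`, which identifies `D(ℓ, b n)` with `D(ℓ, n)`.
-/

open HahnSeries

section LinearlyConjugate

/-- Two self-maps of `R`-modules are linearly conjugate if an `R`-linear isomorphism intertwines
them.  The maps need not be linear: for Frobenius-semilinear maps this is isomorphism of
`φ`-modules. -/
def LinearlyConjugate (R : Type*) {M M' : Type*} [Semiring R] [AddCommMonoid M]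
    [AddCommMonoid M'] [Module R M] [Module R M'] (T : M → M) (T' : M' → M') : Prop :=
  ∃ F : M ≃ₗ[R] M', Function.Semiconj F T T'

namespace LinearlyConjugate

variable {R M M' M'' : Type*} [Semiring R] [AddCommMonoid M] [AddCommMonoid M']
  [AddCommMonoid M''] [Module R M] [Module R M'] [Module R M'']
  {T : M → M} {T' : M' → M'} {T'' : M'' → M''}

theorem refl (T : M → M) : LinearlyConjugate R T T :=
  ⟨LinearEquiv.refl R M, fun _ => rfl⟩

theorem symm : LinearlyConjugate R T T' → LinearlyConjugate R T' T := fun ⟨F, hF⟩ =>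
  ⟨F.symm, hF.inverse_left F.symm_apply_apply F.apply_symm_apply⟩

theorem trans : LinearlyConjugate R T T' → LinearlyConjugate R T' T'' →
    LinearlyConjugate R T T'' := fun ⟨F, hF⟩ ⟨G, hG⟩ =>
  ⟨F.trans G, hF.trans hG⟩

theorem exists_iterate_eq_smul (h : LinearlyConjugate R T T') {i : ℕ} {c : R}
    (hx : ∃ x ≠ 0, T^[i] x = c • x) : ∃ y ≠ 0, T'^[i] y = c • y := by
  obtain ⟨F, hF⟩ := h
  obtain ⟨x, hx0, hx⟩ := hx
  refine ⟨F x, F.map_ne_zero_iff.2 hx0, ?_⟩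
  rw [← (hF.iterate_right i).eq, hx, map_smul]

end LinearlyConjugate

end LinearlyConjugate

theorem iterate_map_ne_zero {G F : Type*} [GroupWithZero G] [FunLike F G G]
    [MonoidWithZeroHomClass F G G] (f : F) (i : ℕ) {x : G} (hx : x ≠ 0) : f^[i] x ≠ 0 := by
  induction i with
  | zero => exact hx
  | succ i ih =>
    rw [Function.iterate_succ_apply']
    exact (map_ne_zero f).2 ih

section TwistedFrobenius

variable {k : Type*} [Field k]

/-- `φ` is the endomorphism `∑ cₘ uᵐ ↦ ∑ σ(cₘ) u^(b m)` of `k((u))`, the Frobenius for which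
`φ`-modules are taken.  It is characterised coefficientwise, so continuity of `φ` is not a separate
condition. -/
structure IsTwistedFrobenius (b : ℕ) (σ : k →+* k) (φ : LaurentSeries k →+* LaurentSeries k) :
    Prop where
  coeff_mul : ∀ (f : LaurentSeries k) (m : ℤ), (φ f).coeff (b * m) = σ (f.coeff m)
  coeff_of_not_dvd : ∀ (f : LaurentSeries k) (m : ℤ), ¬ (b : ℤ) ∣ m → (φ f).coeff m = 0

namespace IsTwistedFrobenius

variable {b : ℕ} {σ : k →+* k} {φ : LaurentSeries k →+* LaurentSeries k}

theorem ne_zero (hφ : IsTwistedFrobenius b σ φ) : b ≠ 0 := by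
  rintro rfl
  have h0 := hφ.coeff_mul 1 0
  have h1 := hφ.coeff_mul 1 1
  simp [coeff_one] at h0 h1

theorem map_single (hφ : IsTwistedFrobenius b σ φ) (w : ℤ) (a : k) :
    φ (single w a) = single (b * w) (σ a) := by
  ext m
  by_cases hm : (b : ℤ) ∣ m
  · obtain ⟨m, rfl⟩ := hm
    simp [hφ.coeff_mul, coeff_single, hφ.ne_zero, apply_ite σ]
  · rw [hφ.coeff_of_not_dvd _ _ hm, coeff_single_of_ne]
    rintro rfl
    exact hm (dvd_mul_right _ _)

theorem iterate_map_single (hφ : IsTwistedFrobenius b σ φ) (i : ℕ) (w : ℤ) (a : k) :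
    φ^[i] (single w a) = single ((b : ℤ) ^ i * w) (σ^[i] a) := by
  induction i with
  | zero => simp
  | succ i ih =>
    rw [Function.iterate_succ_apply', ih, hφ.map_single, ← mul_assoc, ← pow_succ',
      Function.iterate_succ_apply']

theorem order_map (hφ : IsTwistedFrobenius b σ φ) (f : LaurentSeries k) :
    (φ f).order = b * f.order := by
  obtain rfl | hf := eq_or_ne f 0
  · simp
  have hcoeff : (φ f).coeff (φ f).order ≠ 0 := coeff_order_eq_zero.not.2 ((map_ne_zero φ).2 hf)
  apply le_antisymm
  · apply order_le_of_coeff_ne_zero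
    rw [hφ.coeff_mul]
    exact (map_ne_zero σ).2 (coeff_order_eq_zero.not.2 hf)
  · obtain ⟨m, hm⟩ : (b : ℤ) ∣ (φ f).order := by
      by_contra hdvd
      exact hcoeff (hφ.coeff_of_not_dvd f _ hdvd)
    rw [hm, hφ.coeff_mul] at hcoeff
    rw [hm]
    gcongr
    exact order_le_of_coeff_ne_zero ((map_ne_zero σ).1 hcoeff)

theorem order_iterate_map (hφ : IsTwistedFrobenius b σ φ) (i : ℕ) (f : LaurentSeries k) :
    (φ^[i] f).order = (b : ℤ) ^ i * f.order := by
  induction i with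
  | zero => simp
  | succ i ih => rw [Function.iterate_succ_apply', hφ.order_map, ih, pow_succ', mul_assoc]

end IsTwistedFrobenius

end TwistedFrobenius

section Dphi

variable {k : Type*} [Field k] (φ : LaurentSeries k →+* LaurentSeries k) {d : ℕ}

theorem Dphi_apply_of_val_eq_zero (n : ℕ) (a : k) (x : Fin d → LaurentSeries k) {j l : Fin d}
    (hj : (j : ℕ) = 0) (hl : (l : ℕ) + 1 = d) :
    Dphi φ d n a x j = single (n : ℤ) a * φ (x l) := by
  have hlast : (⟨d - 1, by omega⟩ : Fin d) = l := Fin.ext (by simp only; omega)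
  simp [Dphi, hj, hlast]

theorem Dphi_apply_of_val_eq_add_one (n : ℕ) (a : k) (x : Fin d → LaurentSeries k) {j l : Fin d}
    (hjl : (j : ℕ) = l + 1) : Dphi φ d n a x j = φ (x l) := by
  simp [Dphi, hjl]

theorem exists_cyclic_pred (j : Fin d) :
    ∃ l : Fin d, (j : ℕ) = 0 ∧ (l : ℕ) + 1 = d ∨ (j : ℕ) = l + 1 := by
  obtain hj | hj := Nat.eq_zero_or_pos (j : ℕ)
  · exact ⟨⟨d - 1, by omega⟩, .inl ⟨hj, by simp only; omega⟩⟩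
  · exact ⟨⟨j - 1, by omega⟩, .inr (by simp only; omega)⟩

theorem exists_cyclic_succ (l : Fin d) :
    ∃ j : Fin d, (j : ℕ) = 0 ∧ (l : ℕ) + 1 = d ∨ (j : ℕ) = l + 1 := by
  obtain hl | hl := Nat.lt_or_ge (l + 1) d
  · exact ⟨⟨l + 1, hl⟩, .inr rfl⟩
  · exact ⟨⟨0, by omega⟩, .inl ⟨rfl, by omega⟩⟩

/-- `Dphi` as a bundled `φ`-semilinear map.  For `φ = id` it is the linear map given by the matrix
of the `φ`-module, which intertwines the module with its Frobenius pullback. -/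
noncomputable def DphiHom (d n : ℕ) (a : k) :
    (Fin d → LaurentSeries k) →ₛₗ[φ] (Fin d → LaurentSeries k) where
  toFun := Dphi φ d n a
  map_add' x y := by
    funext j
    simp only [Dphi, Pi.add_apply, map_add, mul_add]
    split_ifs <;> rfl
  map_smul' c x := by
    funext j
    simp only [Dphi, Pi.smul_apply, smul_eq_mul, map_mul]
    split_ifs
    · exact mul_left_comm _ _ _
    · rfl

theorem Dphi_injective (n : ℕ) {a : k} (ha : a ≠ 0) : Function.Injective (Dphi φ d n a) := by
  intro x y hxy
  funext l
  obtain ⟨j, ⟨hj, hl⟩ | hjl⟩ := exists_cyclic_succ l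
  · have hsingle : single (n : ℤ) a ≠ 0 := single_ne_zero ha
    have hcoord := congrFun hxy j
    rw [Dphi_apply_of_val_eq_zero φ n a x hj hl, Dphi_apply_of_val_eq_zero φ n a y hj hl] at hcoord
    exact φ.injective (mul_left_cancel₀ hsingle hcoord)
  · have hcoord := congrFun hxy j
    rw [Dphi_apply_of_val_eq_add_one φ n a x hjl, Dphi_apply_of_val_eq_add_one φ n a y hjl]
      at hcoord
    exact φ.injective hcoord

theorem iterate_Dphi_apply_of_val_eq_add (n : ℕ) (a : k) (x : Fin d → LaurentSeries k) (i : ℕ)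
    {j l : Fin d} (hjl : (j : ℕ) = l + i) : (Dphi φ d n a)^[i] x j = φ^[i] (x l) := by
  induction i generalizing j with
  | zero => simp [Fin.ext hjl]
  | succ i ih =>
    rw [Function.iterate_succ_apply', Function.iterate_succ_apply',
      Dphi_apply_of_val_eq_add_one φ n a _ (l := ⟨l + i, by omega⟩) (by simp only; omega), ih rfl]

theorem iterate_Dphi_self_apply (n : ℕ) (a : k) (x : Fin d → LaurentSeries k) (j : Fin d) :
    (Dphi φ d n a)^[d] x j = φ^[j] (single (n : ℤ) a) * φ^[d] (x j) := by
  obtain ⟨i, hi⟩ : ∃ i, d = j + i + 1 := Nat.exists_eq_add_of_lt j.isLt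
  obtain ⟨first, hfirst⟩ : ∃ l : Fin d, (l : ℕ) = 0 := ⟨⟨0, by omega⟩, rfl⟩
  obtain ⟨last, hlast⟩ : ∃ l : Fin d, (l : ℕ) + 1 = d := ⟨⟨d - 1, by omega⟩, by simp only; omega⟩
  have hsplit {α : Type _} (f : α → α) (y : α) : f^[d] y = f^[j] (f (f^[i] y)) := by
    conv_lhs => rw [hi, add_assoc]
    rw [Function.iterate_add_apply, Function.iterate_succ_apply' f]
  rw [hsplit (Dphi φ d n a), hsplit φ, ← iterate_map_mul,
    iterate_Dphi_apply_of_val_eq_add φ n a _ j (l := first) (by omega),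
    Dphi_apply_of_val_eq_zero φ n a _ hfirst hlast,
    iterate_Dphi_apply_of_val_eq_add φ n a x i (l := j) (by omega)]

theorem exists_iterate_Dphi_eq_smul (hd : 0 < d) (n : ℕ) (a : k) :
    ∃ x ≠ 0, (Dphi φ d n a)^[d] x = single (n : ℤ) a • x := by
  refine ⟨Pi.single ⟨0, hd⟩ 1, by simp, ?_⟩
  funext j
  rw [iterate_Dphi_self_apply]
  by_cases hj : j = ⟨0, hd⟩
  · subst hj
    simp [iterate_map_one]
  · simp [hj, iterate_map_zero]

variable {φ}

theorem linearlyConjugate_Dphi_of_mul_eq {n n' : ℕ} {a a' : k} {c : LaurentSeries k}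
    (hc : c ≠ 0) (h : c * single (n : ℤ) a = single (n' : ℤ) a' * φ^[d] c) :
    LinearlyConjugate (LaurentSeries k) (Dphi φ d n a) (Dphi φ d n' a') := by
  refine ⟨LinearEquiv.piCongrRight fun j : Fin d =>
    LinearEquiv.smulOfNeZero _ _ (φ^[j] c) (iterate_map_ne_zero φ j hc), fun x => ?_⟩
  funext j
  obtain ⟨l, ⟨hj, hl⟩ | hjl⟩ := exists_cyclic_pred j
  · have hφc : φ (φ^[l] c) = φ^[d] c := by
      rw [← Function.iterate_succ_apply' φ, Nat.succ_eq_add_one, hl]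
    simp [Dphi_apply_of_val_eq_zero φ _ _ _ hj hl, hj, hφc, ← mul_assoc, h]
  · simp [Dphi_apply_of_val_eq_add_one φ _ _ _ hjl, hjl, Function.iterate_succ_apply']

theorem linearlyConjugate_Dphi_of_map_single {n n' : ℕ} {a a' : k} (ha : a ≠ 0)
    (h : φ (single (n : ℤ) a) = single (n' : ℤ) a') :
    LinearlyConjugate (LaurentSeries k) (Dphi φ d n' a') (Dphi φ d n a) := by
  refine ⟨LinearEquiv.ofInjectiveEndo (DphiHom (RingHom.id _) d n a)
    (Dphi_injective (RingHom.id _) n ha), fun x => ?_⟩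
  change Dphi (RingHom.id _) d n a (Dphi φ d n' a' x) =
    Dphi φ d n a (Dphi (RingHom.id _) d n a x)
  funext j
  simp only [Dphi, RingHom.id_apply, ← h]
  split_ifs <;> simp only [map_mul]

end Dphi

section Classification

variable {k : Type*} [Field k] {b : ℕ} {σ : k →+* k}
  {φ : LaurentSeries k →+* LaurentSeries k} {d d' : ℕ}

namespace IsTwistedFrobenius

theorem exists_dvd_of_iterate_Dphi_eq_smul (hφ : IsTwistedFrobenius b σ φ) {n : ℕ} {N : ℤ}
    {a c : k} (ha : a ≠ 0) (hc : c ≠ 0)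
    (h : ∃ x ≠ 0, (Dphi φ d n a)^[d] x = single N c • x) :
    ∃ s : ℕ, (b : ℤ) ^ d - 1 ∣ N - b ^ s * n := by
  obtain ⟨x, hx, h⟩ := h
  obtain ⟨j, hj⟩ : ∃ j, x j ≠ 0 := Function.ne_iff.1 hx
  have hcoord : φ^[j] (single (n : ℤ) a) * φ^[d] (x j) = single N c * x j := by
    rw [← iterate_Dphi_self_apply, h, Pi.smul_apply, smul_eq_mul]
  have horder : (b : ℤ) ^ (j : ℕ) * n + b ^ d * (x j).order = N + (x j).order := by
    have hsingle : single (n : ℤ) a ≠ 0 := single_ne_zero ha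
    have := congrArg order hcoord
    rwa [order_mul (iterate_map_ne_zero φ j hsingle) (iterate_map_ne_zero φ d hj),
      order_mul (single_ne_zero hc) hj, hφ.order_iterate_map, hφ.order_iterate_map,
      order_single ha, order_single hc] at this
  exact ⟨j, (x j).order, by linarith⟩

theorem linearlyConjugate_Dphi_of_dvd (hφ : IsTwistedFrobenius b σ φ) {n n' : ℕ} {a : k}
    (h : (b : ℤ) ^ d - 1 ∣ n - n') :
    LinearlyConjugate (LaurentSeries k) (Dphi φ d n a) (Dphi φ d n' a) := by
  obtain ⟨w, hw⟩ := h
  refine linearlyConjugate_Dphi_of_mul_eq (c := single w 1) (single_ne_zero one_ne_zero) ?_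
  rw [hφ.iterate_map_single, iterate_map_one, single_mul_single, single_mul_single, mul_comm a]
  congr 2
  linarith

theorem linearlyConjugate_Dphi_pow_mul (hφ : IsTwistedFrobenius b σ φ) (n : ℕ) {a : k}
    (ha : a ≠ 0) (s : ℕ) :
    LinearlyConjugate (LaurentSeries k) (Dphi φ d (b ^ s * n) (σ^[s] a)) (Dphi φ d n a) := by
  induction s with
  | zero => simpa using LinearlyConjugate.refl _
  | succ s ih =>
    refine (linearlyConjugate_Dphi_of_map_single (iterate_map_ne_zero σ s ha) ?_).trans ih
    rw [hφ.map_single, Function.iterate_succ_apply']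
    congr 2
    push_cast
    ring

theorem linearlyConjugate_Dphi_one_iff (hφ : IsTwistedFrobenius b σ φ) (hd : 0 < d) (n n' : ℕ) :
    LinearlyConjugate (LaurentSeries k) (Dphi φ d n 1) (Dphi φ d' n' 1) ↔
      d = d' ∧ ∃ s : ℕ, (b : ℤ) ^ d - 1 ∣ n - b ^ s * n' := by
  constructor
  · intro h
    obtain rfl : d = d' := by
      obtain ⟨F, -⟩ := h
      simpa using F.finrank_eq
    exact ⟨rfl, hφ.exists_dvd_of_iterate_Dphi_eq_smul one_ne_zero one_ne_zero
      (h.exists_iterate_eq_smul (exists_iterate_Dphi_eq_smul φ hd n 1))⟩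
  · rintro ⟨rfl, s, hs⟩
    have hshift : LinearlyConjugate (LaurentSeries k) (Dphi φ d n 1) (Dphi φ d (b ^ s * n') 1) :=
      hφ.linearlyConjugate_Dphi_of_dvd (mod_cast hs)
    have hpow := hφ.linearlyConjugate_Dphi_pow_mul (d := d) n' one_ne_zero s
    rw [iterate_map_one] at hpow
    exact hshift.trans hpow

end IsTwistedFrobenius

end Classification

section Arithmetic

theorem den_natCast_mul_of_coprime {c : ℕ} {r : ℚ} (h : r.den.Coprime c) :
    (c * r).den = r.den := by
  have hgcd : (c * r.num.natAbs).gcd r.den = 1 :=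
    h.symm.mul_left r.reduced
  rw [Rat.mul_den, Rat.num_natCast, Rat.den_natCast, one_mul, Int.natAbs_mul, Int.natAbs_natCast,
    hgcd, Nat.div_one]

theorem den_eq_of_sub_natCast_mul_eq_intCast {c : ℕ} {r r' : ℚ} (hr' : r'.den.Coprime c) {m : ℤ}
    (h : r - c * r' = m) : r.den = r'.den := by
  rw [sub_eq_iff_eq_add'.1 h, Rat.add_intCast_den, den_natCast_mul_of_coprime hr']

theorem exists_sub_mul_eq_intCast_iff_dvd {K : Type*} [Field K] [CharZero K]
    {q N N' : ℤ} (hq : q ≠ 0) (c : ℤ) {r r' : K}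
    (h : ∃ m : ℤ, (N / q - r : K) = m) (h' : ∃ m : ℤ, (N' / q - r' : K) = m) :
    (∃ m : ℤ, r - c * r' = m) ↔ q ∣ N - c * N' := by
  obtain ⟨t, ht⟩ := h
  obtain ⟨t', ht'⟩ := h'
  have hq' : (q : K) ≠ 0 := mod_cast hq
  have hdiff : (N - c * N' : K) = q * (r - c * r' + t - c * t') := by
    have hN : (q : K) * (N / q) = N := mul_div_cancel₀ _ hq'
    have hN' : (q : K) * (N' / q) = N' := mul_div_cancel₀ _ hq'
    rw [← ht, ← ht']
    linear_combination c * hN' - hN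
  constructor
  · rintro ⟨m, hm⟩
    rw [hm] at hdiff
    exact ⟨m + t - c * t', mod_cast hdiff⟩
  · rintro ⟨v, hv⟩
    have hv' : (N - c * N' : K) = q * v := mod_cast hv
    have hcancel : r - c * r' + t - c * t' = v := mul_left_cancel₀ hq' (hdiff.symm.trans hv')
    refine ⟨v - t + c * t', ?_⟩
    push_cast
    linear_combination hcancel

theorem exists_pow_or_exists_pow_of_exists_zpow {K : Type*} [Field K] {b : ℕ} (hb : (b : K) ≠ 0)
    {r r' : K} (h : ∃ s m : ℤ, r - (b : K) ^ s * r' = m) :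
    (∃ (s : ℕ) (m : ℤ), r - (b : K) ^ s * r' = m) ∨
      ∃ (s : ℕ) (m : ℤ), r' - (b : K) ^ s * r = m := by
  obtain ⟨s, m, h⟩ := h
  obtain ⟨s, rfl | rfl⟩ := s.eq_nat_or_neg
  · exact .inl ⟨s, m, by rwa [zpow_natCast] at h⟩
  · have hbs : (b : K) ^ s ≠ 0 := pow_ne_zero s hb
    refine .inr ⟨s, -(b : ℤ) ^ s * m, ?_⟩
    rw [zpow_neg, zpow_natCast] at h
    push_cast
    rw [← h]
    linear_combination -r' * mul_inv_cancel₀ hbs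

theorem orderOf_natCast_zmod_pos {b q : ℕ} [NeZero q] (h : q.Coprime b) :
    0 < orderOf (b : ZMod q) :=
  orderOf_pos_iff.2 (isOfFinOrder_iff_isUnit.2 ((ZMod.isUnit_iff_coprime b q).2 h.symm))

end Arithmetic

section Main

variable {k : Type*} [Field k] {b : ℕ} {σ : k →+* k} {φ : LaurentSeries k →+* LaurentSeries k}

theorem IsTwistedFrobenius.linearlyConjugate_Dphi_orderOf_iff (hφ : IsTwistedFrobenius b σ φ)
    (hb : 1 < b) {r r' : ℚ} (hden : r.den.Coprime b) (hden' : r'.den.Coprime b) {n n' : ℕ}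
    (hn : ∃ m : ℤ, (n : ℚ) / ((b : ℚ) ^ orderOf (b : ZMod r.den) - 1) - r = m)
    (hn' : ∃ m : ℤ, (n' : ℚ) / ((b : ℚ) ^ orderOf (b : ZMod r'.den) - 1) - r' = m) :
    LinearlyConjugate (LaurentSeries k) (Dphi φ (orderOf (b : ZMod r.den)) n 1)
        (Dphi φ (orderOf (b : ZMod r'.den)) n' 1) ↔
      ∃ (s : ℕ) (m : ℤ), r - (b : ℚ) ^ s * r' = m := by
  have : NeZero r.den := ⟨r.den_nz⟩
  have hd : 0 < orderOf (b : ZMod r.den) := orderOf_natCast_zmod_pos hden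
  have hq : (b : ℤ) ^ orderOf (b : ZMod r.den) - 1 ≠ 0 :=
    sub_ne_zero.2 (one_lt_pow₀ (mod_cast hb) hd.ne').ne'
  have hdvd_iff (hℓ : orderOf (b : ZMod r.den) = orderOf (b : ZMod r'.den)) (s : ℕ) :
      (∃ m : ℤ, r - (b : ℚ) ^ s * r' = m) ↔
        (b : ℤ) ^ orderOf (b : ZMod r.den) - 1 ∣ n - b ^ s * n' := by
    rw [← hℓ] at hn'
    simpa using exists_sub_mul_eq_intCast_iff_dvd (N := n) (N' := n') hq (b ^ s)
      (by simpa using hn) (by simpa using hn')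
  rw [hφ.linearlyConjugate_Dphi_one_iff hd]
  constructor
  · rintro ⟨hℓ, s, hs⟩
    exact ⟨s, (hdvd_iff hℓ s).2 hs⟩
  · rintro ⟨s, m, hm⟩
    have hden_eq : r.den = r'.den :=
      den_eq_of_sub_natCast_mul_eq_intCast (c := b ^ s) (hden'.pow_right s) (mod_cast hm)
    have hℓ : orderOf (b : ZMod r.den) = orderOf (b : ZMod r'.den) := by rw [hden_eq]
    exact ⟨hℓ, s, (hdvd_iff hℓ s).1 ⟨m, hm⟩⟩

theorem stmt16_general (hφ : IsTwistedFrobenius b σ φ) (hb : 1 < b) {r r' : ℚ}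
    (hden : r.den.Coprime b) (hden' : r'.den.Coprime b) {n n' : ℕ}
    (hn : ∃ m : ℤ, (n : ℚ) / ((b : ℚ) ^ orderOf (b : ZMod r.den) - 1) - r = m)
    (hn' : ∃ m : ℤ, (n' : ℚ) / ((b : ℚ) ^ orderOf (b : ZMod r'.den) - 1) - r' = m) :
    LinearlyConjugate (LaurentSeries k) (Dphi φ (orderOf (b : ZMod r.den)) n 1)
        (Dphi φ (orderOf (b : ZMod r'.den)) n' 1) ↔
      ∃ s m : ℤ, r - (b : ℚ) ^ s * r' = m := by
  constructor
  · intro h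
    obtain ⟨s, m, hm⟩ := (hφ.linearlyConjugate_Dphi_orderOf_iff hb hden hden' hn hn').1 h
    exact ⟨s, m, by rwa [zpow_natCast]⟩
  · intro h
    obtain h | h := exists_pow_or_exists_pow_of_exists_zpow (mod_cast hφ.ne_zero) h
    · exact (hφ.linearlyConjugate_Dphi_orderOf_iff hb hden hden' hn hn').2 h
    · exact ((hφ.linearlyConjugate_Dphi_orderOf_iff hb hden' hden hn' hn).2 h).symm

end Main

/-- `D(r) ≅ D(r')` if and only if `r` and `r'` have the same class in `R_b`, i.e.
`r - bˢ r' ∈ ℤ` for some `s ∈ ℤ`.  Here `D(r) = D(ℓ(r), n)` with `ℓ(r)` the order of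
`b` modulo the reduced denominator of `r` and `n/(b^{ℓ(r)} - 1) ≡ r (mod ℤ)`. -/
theorem stmt16 (p : ℕ) [Fact p.Prime] (b : ℕ) (hb : 1 < b)
    (σ : AlgebraicClosure (ZMod p) ≃+* AlgebraicClosure (ZMod p))
    (φ : LaurentSeries (AlgebraicClosure (ZMod p)) →+*
      LaurentSeries (AlgebraicClosure (ZMod p)))
    (hφ1 : ∀ (f : LaurentSeries (AlgebraicClosure (ZMod p))) (m : ℤ),
      (φ f).coeff ((b : ℤ) * m) = σ (f.coeff m))
    (hφ2 : ∀ (f : LaurentSeries (AlgebraicClosure (ZMod p))) (m : ℤ),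
      ¬ ((b : ℤ) ∣ m) → (φ f).coeff m = 0)
    (r r' : ℚ) (hden : r.den.Coprime b) (hden' : r'.den.Coprime b)
    (n n' : ℕ)
    (hn : ∃ m : ℤ,
      (n : ℚ) / ((b : ℚ) ^ (orderOf (b : ZMod r.den)) - 1) - r = (m : ℚ))
    (hn' : ∃ m : ℤ,
      (n' : ℚ) / ((b : ℚ) ^ (orderOf (b : ZMod r'.den)) - 1) - r' = (m : ℚ)) :
    (∃ F : (Fin (orderOf (b : ZMod r.den)) →
          LaurentSeries (AlgebraicClosure (ZMod p))) ≃ₗ[LaurentSeries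
            (AlgebraicClosure (ZMod p))]
        (Fin (orderOf (b : ZMod r'.den)) → LaurentSeries (AlgebraicClosure (ZMod p))),
      ∀ x, F (Dphi φ (orderOf (b : ZMod r.den)) n 1 x) =
        Dphi φ (orderOf (b : ZMod r'.den)) n' 1 (F x)) ↔
    (∃ s m : ℤ, r - (b : ℚ) ^ s * r' = (m : ℚ)) :=
  stmt16_general (σ := σ) ⟨hφ1, hφ2⟩ hb hden hden' hn hn'
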